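/- For every bounded nondecreasing càdlàg path q : [0,1) → S^D_+ and every ε > 0, there exist K ∈ ℕ, c > 0, and matrices 0 = q₁ ≤ q₂ ≤ … ≤ q_K with q₂, …, q_K ∈ S^D_{++}, such that the path r(u) = c·u·Id + Σ_{k=1}^{K} q_k 𝟏_{[(k−1)/K, k/K)}(u) belongs to Q_{∞,↑} and satisfies ∫₀¹ |q(u) − r(u)| du < ε. In particular, Q_{∞,↑} is dense, for the L¹ distance, in the set of bounded nondecreasing càdlàg paths from [0,1) to S^D_+. -/

import Mathlib

/-!
STATEMENT 11: For every bounded nondecreasing càdlàg path `q : [0,1) → S^D_+` and every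
`ε > 0`, there exist `K ≥ 1`, `c > 0` and matrices `0 = q₁ ≤ q₂ ≤ … ≤ q_K` with
`q₂, …, q_K ∈ S^D_{++}`, such that `r(u) = c·u·Id + Σ_{k=1}^K q_k 𝟙_{[(k−1)/K, k/K)}(u)`
belongs to `Q_{∞,↑}` and `∫₀¹ |q(u) − r(u)| du < ε`. (Here `Q` indexes `q_{k+1} = Q k` for
`k : Fin K`.) In particular `Q_{∞,↑}` is dense in L¹ in the set of bounded nondecreasing
càdlàg paths from `[0,1)` to `S^D_+`.
-/

noncomputable section

/-- `D × D` real matrices. -/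
abbrev Mat (D : ℕ) := Matrix (Fin D) (Fin D) ℝ

/-- Frobenius inner product `a · b = ∑_{i,j} a_{ij} b_{ij}`. -/
def dotp {D : ℕ} (a b : Mat D) : ℝ := ∑ i, ∑ j, a i j * b i j

/-- Frobenius norm. -/
def fnorm {D : ℕ} (a : Mat D) : ℝ := Real.sqrt (dotp a a)

/-- The largest eigenvalue of a matrix. -/
def lamMax {D : ℕ} (a : Mat D) : ℝ :=
  sSup {t : ℝ | ∃ v : Fin D → ℝ, v ≠ 0 ∧ a.mulVec v = t • v}

/-- The smallest eigenvalue of a matrix. -/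
def lamMin {D : ℕ} (a : Mat D) : ℝ :=
  sInf {t : ℝ | ∃ v : Fin D → ℝ, v ≠ 0 ∧ a.mulVec v = t • v}

/-- `q` is càdlàg on `[0,1)`: right-continuous on `[0,1)` with left limits on `(0,1)`. -/
def Cadlag {D : ℕ} (q : ℝ → Mat D) : Prop :=
  (∀ u ∈ Set.Ico (0:ℝ) 1, ContinuousWithinAt q (Set.Ici u) u) ∧
  (∀ u ∈ Set.Ioo (0:ℝ) 1, ∃ L : Mat D, Filter.Tendsto q (nhdsWithin u (Set.Iio u)) (nhds L))

/-- `q ∈ Q_{∞,↑}`. -/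
def IsQInftyUp {D : ℕ} (q : ℝ → Mat D) : Prop :=
  (∀ u ∈ Set.Ico (0:ℝ) 1, (q u).PosSemidef) ∧
  (∃ C : ℝ, ∀ u ∈ Set.Ico (0:ℝ) 1, fnorm (q u) ≤ C) ∧
  (∀ u v : ℝ, 0 ≤ u → u ≤ v → v < 1 → (q v - q u).PosSemidef) ∧
  Cadlag q ∧
  q 0 = 0 ∧
  (∃ c : ℝ, 0 < c ∧ ∀ u v : ℝ, 0 ≤ u → u < v → v < 1 →
    ((q v - q u) - (c * (v - u)) • (1 : Mat D)).PosSemidef ∧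
    lamMax (q v - q u) / lamMin (q v - q u) ≤ 1 / c)

/-!
Sample `q` at the grid points `k / K` and add the tilt `c (k / K) Id` to the samples. With the
drift `c u Id`, an increment of the resulting path is a multiple of `Id` within a grid block, and
it is at least `(c / K) Id` across blocks, so its ellipticity is bounded. The sampling error is
controlled through the trace: `|a| ≤ tr a` for `a ≥ 0`, so at time `u` it is at most
`tr q(u) - tr q(u - 1 / K)` where `q` is extended by `0` to negative times, and integrating this
difference of monotone functions telescopes to `O(1 / K)`. Extending `q` beyond `(0, 1)` to a
monotone path on the whole line costs nothing, because the two end points form a null set.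
-/

section LoewnerOrder

open scoped ComplexOrder MatrixOrder Matrix.Norms.Frobenius

variable {n 𝕜 : Type*} [Fintype n] [RCLike 𝕜] {A B : Matrix n n 𝕜}

lemma trace_le_trace_of_le (h : A ≤ B) : A.trace ≤ B.trace :=
  (Matrix.tracePositiveLinearMap n ℝ 𝕜).monotone' h

lemma frobenius_norm_sq_eq_re_trace (A : Matrix n n 𝕜) :
    ‖A‖ ^ 2 = RCLike.re (star A * A).trace := by
  rw [Matrix.frobenius_norm_def, ← Real.sqrt_eq_rpow, Real.sq_sqrt (by positivity),
    Finset.sum_comm]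
  simp only [Matrix.trace, Matrix.diag_apply, Matrix.mul_apply, Matrix.star_apply,
    RCLike.star_def, RCLike.conj_mul, ← RCLike.ofReal_pow, map_sum, RCLike.ofReal_re,
    Real.rpow_ofNat]

lemma frobenius_norm_le_re_trace (hA : 0 ≤ A) : ‖A‖ ≤ RCLike.re A.trace := by
  classical
  obtain ⟨B, rfl⟩ := CStarAlgebra.nonneg_iff_eq_star_mul_self.mp hA
  calc ‖star B * B‖ ≤ ‖star B‖ * ‖B‖ := Matrix.frobenius_norm_mul _ _
    _ = ‖B‖ ^ 2 := by rw [norm_star, sq]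
    _ = RCLike.re (star B * B).trace := frobenius_norm_sq_eq_re_trace B

variable [DecidableEq n]

lemma le_smul_one_of_frobenius_norm_le {C : ℝ} (hA : A.IsHermitian) (hC : ‖A‖ ≤ C) :
    A ≤ (C * ‖(1 : Matrix n n 𝕜)‖) • (1 : Matrix n n 𝕜) := by
  rw [← Algebra.algebraMap_eq_smul_one, le_algebraMap_iff_spectrum_le hA]
  intro t ht
  calc t ≤ ‖t‖ := Real.le_norm_self t
    _ ≤ ‖A‖ * ‖(1 : Matrix n n 𝕜)‖ := spectrum.norm_le_norm_mul_of_mem ht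
    _ ≤ C * ‖(1 : Matrix n n 𝕜)‖ := by gcongr

lemma setOf_eigenvalue_eq_spectrum {K : Type*} [Field K] (A : Matrix n n K) :
    {t : K | ∃ v : n → K, v ≠ 0 ∧ A.mulVec v = t • v} = spectrum K A := by
  ext t
  rw [← Matrix.spectrum_toLin', ← Module.End.hasEigenvalue_iff_mem_spectrum,
    Module.End.hasEigenvalue_iff, Submodule.ne_bot_iff]
  simp only [Set.mem_ofPred_eq, Module.End.mem_eigenspace_iff, Matrix.toLin'_apply, and_comm]

lemma lamMax_div_lamMin_le {D : ℕ} {a : Mat D} {s t : ℝ} (hs : 0 < s) (ht : 0 ≤ t)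
    (hsa : s • (1 : Mat D) ≤ a) (hat : a ≤ t • (1 : Mat D)) : lamMax a / lamMin a ≤ t / s := by
  have ha : IsSelfAdjoint a := .of_nonneg ((smul_nonneg hs.le zero_le_one).trans hsa)
  rw [← Algebra.algebraMap_eq_smul_one] at hsa hat
  have hle := (le_algebraMap_iff_spectrum_le ha).mp hat
  have hge := (algebraMap_le_iff_le_spectrum ha).mp hsa
  rw [lamMax, lamMin, setOf_eigenvalue_eq_spectrum]
  rcases (spectrum ℝ a).eq_empty_or_nonempty with hempty | hne
  · simpa [hempty] using div_nonneg ht hs.le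
  · exact div_le_div₀ ht (csSup_le hne hle) hs (le_csInf hne hge)

lemma fnorm_eq_frobenius_norm {D : ℕ} (a : Mat D) : fnorm a = ‖a‖ := by
  simp [fnorm, dotp, Matrix.frobenius_norm_def, Real.sqrt_eq_rpow, sq]

end LoewnerOrder

instance instPseudoMetrizableSpaceMatrix {m n R : Type*} [Finite m] [Finite n]
    [TopologicalSpace R] [TopologicalSpace.PseudoMetrizableSpace R] :
    TopologicalSpace.PseudoMetrizableSpace (Matrix m n R) :=
  have := Fintype.ofFinite m
  have := Fintype.ofFinite n
  inferInstanceAs (TopologicalSpace.PseudoMetrizableSpace (m → n → R))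

section MonotonePaths

open MeasureTheory Set
open scoped MatrixOrder Matrix.Norms.Frobenius

variable {n : Type*} [Fintype n] {p : ℝ → Matrix n n ℝ}

lemma monotone_trace (hp : Monotone p) : Monotone fun u => (p u).trace :=
  fun _ _ huv => trace_le_trace_of_le (hp huv)

lemma exists_monotone_eqOn_Ioo {α β : Type*} [LinearOrder α] [Preorder β] {f : α → β} {a b : α}
    {m M : β} (hf : MonotoneOn f (Ioo a b)) (hmM : m ≤ M) (hm : ∀ x ∈ Ioo a b, m ≤ f x)
    (hM : ∀ x ∈ Ioo a b, f x ≤ M) :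
    ∃ g : α → β, Monotone g ∧ (∀ x ≤ a, g x = m) ∧ EqOn g f (Ioo a b) := by
  refine ⟨fun x => if x ≤ a then m else if x < b then f x else M, fun x y hxy => ?_,
    fun x hx => if_pos hx, fun x hx => by simp [hx.1.not_ge, hx.2]⟩
  have := @hf x
  grind [MonotoneOn]

lemma exists_monotone_eqOn_Ioo_of_norm_le {a b C : ℝ} (hp : MonotoneOn p (Ioo a b))
    (hnonneg : ∀ u ∈ Ioo a b, 0 ≤ p u) (hC : ∀ u ∈ Ioo a b, ‖p u‖ ≤ C) :
    ∃ r : ℝ → Matrix n n ℝ, Monotone r ∧ (∀ u ≤ a, r u = 0) ∧ EqOn r p (Ioo a b) := by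
  classical
  refine exists_monotone_eqOn_Ioo (M := (|C| * ‖(1 : Matrix n n ℝ)‖) • 1) hp
    (smul_nonneg (by positivity) zero_le_one) hnonneg fun u hu => ?_
  exact le_smul_one_of_frobenius_norm_le
    (Matrix.nonneg_iff_posSemidef.mp (hnonneg u hu)).isHermitian ((hC u hu).trans (le_abs_self C))

lemma norm_sub_le_abs_trace_sub (hp : Monotone p) (u v : ℝ) :
    ‖p v - p u‖ ≤ |(p v).trace - (p u).trace| := by
  wlog huv : u ≤ v generalizing u v
  · rw [norm_sub_rev, abs_sub_comm]
    exact this v u (le_of_not_ge huv)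
  · rw [← Matrix.trace_sub]
    exact (frobenius_norm_le_re_trace (sub_nonneg.mpr (hp huv))).trans (le_abs_self _)

lemma continuousAt_of_continuousAt_trace (hp : Monotone p) {u : ℝ}
    (hu : ContinuousAt (fun u => (p u).trace) u) : ContinuousAt p u :=
  tendsto_iff_norm_sub_tendsto_zero.mpr <| squeeze_zero (fun _ => norm_nonneg _)
    (norm_sub_le_abs_trace_sub hp u) (tendsto_iff_norm_sub_tendsto_zero.mp hu)

lemma stronglyMeasurable_of_monotone {n : Type*} [Finite n] {p : ℝ → Matrix n n ℝ}
    (hp : Monotone p) : StronglyMeasurable p := by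
  have := Fintype.ofFinite n
  exact .of_countable_not_continuousAt <| (monotone_trace hp).countable_not_continuousAt.mono
    fun _ hu htrace => hu (continuousAt_of_continuousAt_trace hp htrace)

lemma intervalIntegrable_sub_comp_sub {f : ℝ → ℝ} (hf : Monotone f) (a b h : ℝ) :
    IntervalIntegrable (fun u => f u - f (u - h)) volume a b :=
  have hshift : Monotone fun u => f (u - h) := fun _ _ huv => hf (by gcongr)
  hf.intervalIntegrable.sub hshift.intervalIntegrable

lemma integral_sub_comp_sub_le {f : ℝ → ℝ} (hf : Monotone f) {a b h : ℝ} (hab : a ≤ b)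
    (hh : 0 < h) : ∫ u in a..b, (f u - f (u - h)) ≤ h * (f b - f (a - h)) := by
  have hshift : Monotone fun u => f (u - h) := fun u v huv => hf (by gcongr)
  have hslope := (hshift.monotoneOn (Icc a (b + h))).intervalIntegral_slope_le hab hh.le
  simp only [slope, add_sub_cancel_left, add_sub_cancel_right, vsub_eq_sub, smul_eq_mul,
    intervalIntegral.integral_const_mul] at hslope
  rwa [inv_mul_le_iff₀ hh] at hslope

end MonotonePaths

section StepPaths

open Set

variable {K : ℕ} {u v : ℝ}

/-- The `k`-th interval `[k / K, (k + 1) / K)` of the uniform partition of `[0, 1)`, counting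
from `k = 0`. -/
def gridBlock (k : Fin K) : Set ℝ := Ico ((k : ℝ) / K) (((k : ℝ) + 1) / K)

/-- The path on `[0, 1)` with constant value `Q k` on `gridBlock k`, for each `k : Fin K`. -/
def stepPath {E : Type*} [AddCommMonoid E] (Q : Fin K → E) (u : ℝ) : E :=
  ∑ k : Fin K, (gridBlock k).indicator (fun _ => Q k) u

lemma le_of_mem_gridBlock {k l : Fin K} (hk : u ∈ gridBlock k) (hl : v ∈ gridBlock l)
    (huv : u ≤ v) : k ≤ l := by
  have hK : (0 : ℝ) < K := by exact_mod_cast k.pos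
  have hlt : (k : ℝ) < (l : ℝ) + 1 :=
    (div_lt_div_iff_of_pos_right hK).mp ((hk.1.trans huv).trans_lt hl.2)
  exact Fin.le_def.mpr (Nat.lt_succ_iff.mp (by exact_mod_cast hlt))

lemma exists_mem_gridBlock [NeZero K] (hu : u ∈ Ico (0 : ℝ) 1) : ∃ k : Fin K, u ∈ gridBlock k := by
  have hK : (0 : ℝ) < K := by exact_mod_cast NeZero.pos K
  have huK : 0 ≤ u * K := mul_nonneg hu.1 hK.le
  have hlt : ⌊u * K⌋₊ < K := (Nat.floor_lt huK).mpr (mul_lt_of_lt_one_left hK hu.2)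
  exact ⟨⟨⌊u * K⌋₊, hlt⟩, (div_le_iff₀ hK).mpr (Nat.floor_le huK),
    (lt_div_iff₀ hK).mpr (Nat.lt_floor_add_one _)⟩

lemma stepPath_of_mem_gridBlock {E : Type*} [AddCommMonoid E] (Q : Fin K → E) {k : Fin K}
    (hu : u ∈ gridBlock k) : stepPath Q u = Q k := by
  rw [stepPath, Finset.sum_eq_single k, indicator_of_mem hu]
  · exact fun l _ hlk => indicator_of_notMem (fun hl => hlk
      (le_antisymm (le_of_mem_gridBlock hl hu le_rfl) (le_of_mem_gridBlock hu hl le_rfl))) _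
  · exact fun hk => absurd (Finset.mem_univ k) hk

lemma stronglyMeasurable_stepPath {E : Type*} [AddCommMonoid E] [TopologicalSpace E]
    [ContinuousAdd E] (Q : Fin K → E) : MeasureTheory.StronglyMeasurable (stepPath Q) :=
  Finset.stronglyMeasurable_fun_sum _ fun _ _ =>
    MeasureTheory.stronglyMeasurable_const.indicator measurableSet_Ico

end StepPaths

section CadlagPaths

open Set Filter Topology

variable {D : ℕ}

lemma eventuallyConst_Ico_nhdsGE {α : Type*} [LinearOrder α] [TopologicalSpace α]
    [OrderClosedTopology α] (a b u : α) : EventuallyConst (Ico a b) (𝓝[≥] u) := by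
  rw [eventuallyConst_set]
  rcases lt_or_ge u a with hua | hau
  · exact .inr (((eventually_lt_nhds hua).filter_mono nhdsWithin_le_nhds).mono
      fun x hx hx' => hx'.1.not_gt hx)
  rcases lt_or_ge u b with hub | hbu
  · exact .inl (Ico_mem_nhdsGE_of_mem ⟨hau, hub⟩)
  · exact .inr (eventually_mem_nhdsWithin.mono fun x hx hx' => hx'.2.not_ge (hbu.trans hx))

lemma eventuallyConst_Ico_nhdsLT {α : Type*} [LinearOrder α] [TopologicalSpace α]
    [OrderClosedTopology α] (a b u : α) : EventuallyConst (Ico a b) (𝓝[<] u) := by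
  rw [eventuallyConst_set]
  rcases le_or_gt u a with hua | hau
  · exact .inr (eventually_mem_nhdsWithin.mono fun x hx hx' => (hx'.1.trans_lt hx).not_ge hua)
  rcases le_or_gt u b with hub | hbu
  · exact .inl (Ico_mem_nhdsLT_of_mem ⟨hau, hub⟩)
  · exact .inr (((eventually_gt_nhds hbu).filter_mono nhdsWithin_le_nhds).mono
      fun x hx hx' => hx'.2.not_gt hx)

namespace Cadlag

lemma of_continuous {q : ℝ → Mat D} (hq : Continuous q) : Cadlag q :=
  ⟨fun _ _ => hq.continuousWithinAt, fun u _ => ⟨q u, hq.continuousWithinAt⟩⟩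

lemma add {q r : ℝ → Mat D} (hq : Cadlag q) (hr : Cadlag r) : Cadlag fun u => q u + r u := by
  refine ⟨fun u hu => (hq.1 u hu).add (hr.1 u hu), fun u hu => ?_⟩
  obtain ⟨L, hL⟩ := hq.2 u hu
  obtain ⟨M, hM⟩ := hr.2 u hu
  exact ⟨L + M, hL.add hM⟩

lemma sum {ι : Type*} {s : Finset ι} {q : ι → ℝ → Mat D} (hq : ∀ i ∈ s, Cadlag (q i)) :
    Cadlag fun u => ∑ i ∈ s, q i u := by
  classical
  induction s using Finset.induction_on with
  | empty => simpa using of_continuous continuous_const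
  | insert i s hi ih =>
    simp only [Finset.sum_insert hi]
    exact (hq i (by simp)).add (ih fun j hj => hq j (by simp [hj]))

lemma indicator_Ico (a b : ℝ) (x : Mat D) : Cadlag ((Ico a b).indicator fun _ => x) := by
  refine ⟨fun u _ => ?_, fun u _ => ?_⟩
  · obtain ⟨y, hy⟩ := eventuallyConst_iff_exists_eventuallyEq.mp
      ((eventuallyConst_Ico_nhdsGE a b u).indicator_const x)
    exact continuousWithinAt_const.congr_of_eventuallyEq hy
      (hy.self_of_nhdsWithin self_mem_Ici)
  · obtain ⟨y, hy⟩ := eventuallyConst_iff_exists_eventuallyEq.mp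
      ((eventuallyConst_Ico_nhdsLT a b u).indicator_const x)
    exact ⟨y, tendsto_const_nhds.congr' hy.symm⟩

lemma stepPath {K : ℕ} (Q : Fin K → Mat D) : Cadlag (stepPath Q) :=
  .sum fun _ _ => .indicator_Ico _ _ _

end Cadlag

end CadlagPaths

section UniformlyEllipticPaths

open Set
open scoped MatrixOrder Matrix.Norms.Frobenius

variable {D : ℕ}

lemma isQInftyUp_of_increments {r : ℝ → Mat D} {c M Λ : ℝ} (hr : Cadlag r) (hr0 : r 0 = 0)
    (hc : 0 < c) (hΛ : 0 < Λ)
    (hlower : ∀ u v, 0 ≤ u → u ≤ v → v < 1 → (c * (v - u)) • (1 : Mat D) ≤ r v - r u)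
    (hupper : ∀ u ∈ Ico (0 : ℝ) 1, r u ≤ M • (1 : Mat D))
    (hellipt : ∀ u v, 0 ≤ u → u < v → v < 1 → lamMax (r v - r u) / lamMin (r v - r u) ≤ Λ) :
    IsQInftyUp r := by
  have hmono : ∀ u v, 0 ≤ u → u ≤ v → v < 1 → r u ≤ r v := fun u v hu huv hv =>
    sub_nonneg.mp ((smul_nonneg (mul_nonneg hc.le (sub_nonneg.mpr huv)) zero_le_one).trans
      (hlower u v hu huv hv))
  have hnonneg : ∀ u ∈ Ico (0 : ℝ) 1, 0 ≤ r u := fun u hu => hr0 ▸ hmono 0 u le_rfl hu.1 hu.2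
  have hc' : 0 < min c Λ⁻¹ := lt_min hc (inv_pos.mpr hΛ)
  refine ⟨fun u hu => Matrix.nonneg_iff_posSemidef.mp (hnonneg u hu),
    ⟨(M • (1 : Mat D)).trace, fun u hu => ?_⟩, hmono, hr, hr0, min c Λ⁻¹, hc',
    fun u v hu huv hv => ⟨?_, ?_⟩⟩
  · rw [fnorm_eq_frobenius_norm]
    exact (frobenius_norm_le_re_trace (hnonneg u hu)).trans (trace_le_trace_of_le (hupper u hu))
  · refine Matrix.le_iff.mp (le_trans ?_ (hlower u v hu huv.le hv))
    have := sub_pos.mpr huv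
    gcongr
    exact min_le_left _ _
  · calc _ ≤ Λ := hellipt u v hu huv hv
      _ ≤ 1 / min c Λ⁻¹ := by
        rw [le_one_div hΛ hc', one_div]
        exact min_le_right _ _

/-- The path `u ↦ c u Id + ∑ₖ Q k 𝟙_{[k / K, (k + 1) / K)}(u)`. -/
def linearAddStepPath {K : ℕ} (c : ℝ) (Q : Fin K → Mat D) (u : ℝ) : Mat D :=
  (c * u) • (1 : Mat D) + stepPath Q u

variable {K : ℕ} {c δ M u v : ℝ} {Q : Fin K → Mat D}

lemma linearAddStepPath_of_mem_gridBlock (c : ℝ) (Q : Fin K → Mat D) {k : Fin K}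
    (hu : u ∈ gridBlock k) : linearAddStepPath c Q u = (c * u) • (1 : Mat D) + Q k := by
  rw [linearAddStepPath, stepPath_of_mem_gridBlock Q hu]

lemma linearAddStepPath_zero [NeZero K] (hQ0 : Q 0 = 0) : linearAddStepPath c Q 0 = 0 := by
  have h0 : (0 : ℝ) ∈ gridBlock (0 : Fin K) := by
    have : (0 : ℝ) < K := by exact_mod_cast NeZero.pos K
    simpa [gridBlock]
  simp [linearAddStepPath_of_mem_gridBlock c Q h0, hQ0]

lemma cadlag_linearAddStepPath (c : ℝ) (Q : Fin K → Mat D) : Cadlag (linearAddStepPath c Q) :=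
  (Cadlag.of_continuous (by fun_prop)).add (Cadlag.stepPath Q)

lemma stronglyMeasurable_linearAddStepPath (c : ℝ) (Q : Fin K → Mat D) :
    MeasureTheory.StronglyMeasurable (linearAddStepPath c Q) :=
  (Continuous.stronglyMeasurable (by fun_prop)).add (stronglyMeasurable_stepPath Q)

lemma exists_linearAddStepPath_sub_eq [NeZero K] (c : ℝ) (Q : Fin K → Mat D) (hu : 0 ≤ u)
    (huv : u ≤ v) (hv : v < 1) : ∃ k l, k ≤ l ∧
      linearAddStepPath c Q v - linearAddStepPath c Q u =
        (c * (v - u)) • (1 : Mat D) + (Q l - Q k) := by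
  obtain ⟨k, hk⟩ := exists_mem_gridBlock (K := K) ⟨hu, huv.trans_lt hv⟩
  obtain ⟨l, hl⟩ := exists_mem_gridBlock (K := K) ⟨hu.trans huv, hv⟩
  refine ⟨k, l, le_of_mem_gridBlock hk hl huv, ?_⟩
  rw [linearAddStepPath_of_mem_gridBlock c Q hl, linearAddStepPath_of_mem_gridBlock c Q hk]
  module

lemma linearAddStepPath_le [NeZero K] (hc : 0 ≤ c) (hQM : ∀ k, Q k ≤ M • (1 : Mat D))
    (hu : u ∈ Ico (0 : ℝ) 1) : linearAddStepPath c Q u ≤ (c + M) • (1 : Mat D) := by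
  obtain ⟨k, hk⟩ := exists_mem_gridBlock (K := K) hu
  rw [linearAddStepPath_of_mem_gridBlock c Q hk, add_smul]
  gcongr
  · exact mul_le_of_le_one_right hc hu.2.le
  · exact hQM k

-- Within a block the increment is a multiple of `Id`; between different blocks, the jump of at
-- least `δ Id` bounds the smallest eigenvalue from below.
lemma ellipticity_linearAddStepPath_sub_le [NeZero K] (hc : 0 < c) (hδ : 0 < δ) (hM : 0 ≤ M)
    (hQδ : ∀ k l, k < l → δ • (1 : Mat D) ≤ Q l - Q k)
    (hQM : ∀ k l, Q l - Q k ≤ M • (1 : Mat D)) (hu : 0 ≤ u) (huv : u < v) (hv : v < 1) :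
    lamMax (linearAddStepPath c Q v - linearAddStepPath c Q u) /
      lamMin (linearAddStepPath c Q v - linearAddStepPath c Q u) ≤ 1 + (c + M) / δ := by
  obtain ⟨k, l, hkl, hsub⟩ := exists_linearAddStepPath_sub_eq c Q hu huv.le hv
  have hs : 0 < c * (v - u) := mul_pos hc (sub_pos.mpr huv)
  rw [hsub]
  rcases hkl.eq_or_lt with rfl | hlt
  · rw [sub_self, add_zero]
    refine (lamMax_div_lamMin_le hs hs.le le_rfl le_rfl).trans ?_
    rw [div_self hs.ne']
    exact le_add_of_nonneg_right (by positivity)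
  · refine (lamMax_div_lamMin_le hδ (add_nonneg hc.le hM) ?_ ?_).trans
      (le_add_of_nonneg_left zero_le_one)
    · exact (hQδ k l hlt).trans (le_add_of_nonneg_left (smul_nonneg hs.le zero_le_one))
    · rw [add_smul]
      gcongr
      · exact mul_le_of_le_one_right hc.le (by linarith)
      · exact hQM k l

theorem isQInftyUp_linearAddStepPath [NeZero K] (hc : 0 < c) (hδ : 0 < δ) (hQ0 : Q 0 = 0)
    (hQδ : ∀ k l, k < l → δ • (1 : Mat D) ≤ Q l - Q k) :
    IsQInftyUp (linearAddStepPath c Q) := by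
  have hQ : Monotone Q := monotone_iff_forall_lt.mpr fun k l hkl =>
    sub_nonneg.mp ((smul_nonneg hδ.le zero_le_one).trans (hQδ k l hkl))
  have hnonneg (k) : 0 ≤ Q k := hQ0 ▸ hQ (Fin.zero_le k)
  obtain ⟨C, hC⟩ := Finite.bddAbove_range fun k => ‖Q k‖
  have hQC (k) : ‖Q k‖ ≤ C := hC (mem_range_self k)
  set M := C * ‖(1 : Mat D)‖
  have hM : 0 ≤ M := mul_nonneg ((norm_nonneg _).trans (hQC 0)) (norm_nonneg _)
  have hQM (k) : Q k ≤ M • (1 : Mat D) :=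
    le_smul_one_of_frobenius_norm_le (Matrix.nonneg_iff_posSemidef.mp (hnonneg k)).isHermitian
      (hQC k)
  refine isQInftyUp_of_increments (cadlag_linearAddStepPath c Q) (linearAddStepPath_zero hQ0) hc
    (by positivity) (fun u v hu huv hv => ?_) (fun u hu => linearAddStepPath_le hc.le hQM hu)
    (fun u v => ellipticity_linearAddStepPath_sub_le hc hδ hM hQδ fun k l =>
      (sub_le_self _ (hnonneg k)).trans (hQM l))
  obtain ⟨k, l, hkl, hsub⟩ := exists_linearAddStepPath_sub_eq c Q hu huv hv
  rw [hsub]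
  exact le_add_of_nonneg_right (sub_nonneg.mpr (hQ hkl))

end UniformlyEllipticPaths

section Approximation

open Set MeasureTheory
open scoped MatrixOrder Matrix.Norms.Frobenius

variable {D K : ℕ} {c : ℝ} {p : ℝ → Mat D}

/-- The values `p (k / K) + c (k / K) Id` of the tilted path `p + c · Id` at the left end points
of the grid blocks. The tilt makes consecutive values differ by at least `(c / K) Id`. -/
def tiltedSample (K : ℕ) (c : ℝ) (p : ℝ → Mat D) (k : Fin K) : Mat D :=
  (c * ((k : ℝ) / K)) • (1 : Mat D) + p ((k : ℝ) / K)

lemma smul_one_le_tiltedSample_sub (hp : Monotone p) {k l : Fin K} (hkl : k ≤ l) :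
    (c * (((l : ℝ) - k) / K)) • (1 : Mat D) ≤ tiltedSample K c p l - tiltedSample K c p k := by
  have hle : p ((k : ℝ) / K) ≤ p ((l : ℝ) / K) := hp (by gcongr; exact_mod_cast hkl)
  have hsub : tiltedSample K c p l - tiltedSample K c p k =
      (c * (((l : ℝ) - k) / K)) • (1 : Mat D) + (p ((l : ℝ) / K) - p ((k : ℝ) / K)) := by
    unfold tiltedSample
    module
  exact hsub ▸ le_add_of_nonneg_right (sub_nonneg.mpr hle)

lemma monotone_tiltedSample (hp : Monotone p) (hc : 0 ≤ c) : Monotone (tiltedSample K c p) := by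
  intro k l hkl
  have : (0 : ℝ) ≤ (l : ℝ) - k := sub_nonneg.mpr (by exact_mod_cast hkl)
  exact sub_nonneg.mp ((smul_nonneg (by positivity) zero_le_one).trans
    (smul_one_le_tiltedSample_sub hp hkl))

lemma posDef_tiltedSample (hp : Monotone p) (hp0 : p 0 = 0) (hc : 0 < c) {k : Fin K}
    (hk : (k : ℕ) ≠ 0) : (tiltedSample K c p k).PosDef := by
  have hK : (0 : ℝ) < K := by exact_mod_cast k.pos
  have : (0 : ℝ) < (k : ℕ) := by exact_mod_cast Nat.pos_of_ne_zero hk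
  have hpk : 0 ≤ p ((k : ℝ) / K) := hp0 ▸ hp (by positivity)
  exact (Matrix.PosDef.one.smul (by positivity)).add_posSemidef
    (Matrix.nonneg_iff_posSemidef.mp hpk)

theorem isQInftyUp_linearAddStepPath_tiltedSample [NeZero K] (hp : Monotone p) (hp0 : p 0 = 0)
    (hc : 0 < c) : IsQInftyUp (linearAddStepPath c (tiltedSample K c p)) := by
  have hK : (0 : ℝ) < K := by exact_mod_cast NeZero.pos K
  refine isQInftyUp_linearAddStepPath hc (div_pos hc hK) (by simp [tiltedSample, hp0])
    fun k l hkl => le_trans ?_ (smul_one_le_tiltedSample_sub hp hkl.le)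
  have hgap : (1 : ℝ) ≤ (l : ℝ) - k := by
    have : (k : ℝ) + 1 ≤ l := by exact_mod_cast hkl
    linarith
  rw [div_eq_mul_one_div]
  gcongr

-- On its block, `u - 1 / K < k / K ≤ u`, so the sampling error is at most `p u - p (u - 1 / K)`.
lemma norm_sub_linearAddStepPath_tiltedSample_le [NeZero K] (hp : Monotone p) (hc : 0 ≤ c) {u : ℝ}
    (hu : u ∈ Ico (0 : ℝ) 1) :
    ‖p u - linearAddStepPath c (tiltedSample K c p) u‖ ≤
      ((p u).trace - (p (u - 1 / K)).trace) + 2 * c * ‖(1 : Mat D)‖ := by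
  obtain ⟨k, hk⟩ := exists_mem_gridBlock (K := K) hu
  have hkK : 0 ≤ (k : ℝ) / K := by positivity
  have hprev : p (u - 1 / K) ≤ p ((k : ℝ) / K) :=
    hp (by linarith [hk.2, add_div (k : ℝ) 1 K])
  have hsplit : p u - linearAddStepPath c (tiltedSample K c p) u =
      (p u - p ((k : ℝ) / K)) - (c * (u + (k : ℝ) / K)) • (1 : Mat D) := by
    rw [linearAddStepPath_of_mem_gridBlock c _ hk, tiltedSample]
    module
  have hsample : ‖p u - p ((k : ℝ) / K)‖ ≤ (p u).trace - (p (u - 1 / K)).trace :=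
    calc _ ≤ (p u - p ((k : ℝ) / K)).trace :=
          frobenius_norm_le_re_trace (sub_nonneg.mpr (hp hk.1))
      _ = (p u).trace - (p ((k : ℝ) / K)).trace := Matrix.trace_sub _ _
      _ ≤ (p u).trace - (p (u - 1 / K)).trace := sub_le_sub_left (trace_le_trace_of_le hprev) _
  have htilt : c * (u + (k : ℝ) / K) ≤ 2 * c := by nlinarith [hk.1, hu.2]
  calc _ ≤ ‖p u - p ((k : ℝ) / K)‖ + ‖(c * (u + (k : ℝ) / K)) • (1 : Mat D)‖ :=
        hsplit ▸ norm_sub_le _ _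
    _ ≤ _ := by
      rw [norm_smul, Real.norm_of_nonneg (mul_nonneg hc (add_nonneg hu.1 hkK))]
      gcongr

lemma intervalIntegrable_norm_sub_linearAddStepPath_tiltedSample [NeZero K] (hp : Monotone p)
    (hc : 0 ≤ c) :
    IntervalIntegrable (fun u => ‖p u - linearAddStepPath c (tiltedSample K c p) u‖)
      volume 0 1 := by
  have hbound := (intervalIntegrable_sub_comp_sub (monotone_trace hp) 0 1 (1 / (K : ℝ))).add
    (intervalIntegrable_const (c := 2 * c * ‖(1 : Mat D)‖))
  rw [intervalIntegrable_iff_integrableOn_Ioo_of_le zero_le_one] at hbound ⊢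
  refine hbound.mono' ?_ (ae_restrict_of_forall_mem measurableSet_Ioo fun u hu => ?_)
  · exact ((stronglyMeasurable_of_monotone hp).sub
      (stronglyMeasurable_linearAddStepPath c _)).norm.aestronglyMeasurable
  · rw [norm_norm]
    exact norm_sub_linearAddStepPath_tiltedSample_le hp hc (Ioo_subset_Ico_self hu)

lemma integral_norm_sub_linearAddStepPath_tiltedSample_le [NeZero K] (hp : Monotone p)
    (hc : 0 ≤ c) :
    ∫ u in (0 : ℝ)..1, ‖p u - linearAddStepPath c (tiltedSample K c p) u‖ ≤
      1 / K * ((p 1).trace - (p (0 - 1 / K)).trace) + 2 * c * ‖(1 : Mat D)‖ := by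
  have hK : (0 : ℝ) < 1 / K := by
    have : (0 : ℝ) < K := by exact_mod_cast NeZero.pos K
    positivity
  have hdiff := intervalIntegrable_sub_comp_sub (monotone_trace hp) 0 1 (1 / (K : ℝ))
  calc _ ≤ ∫ u in (0 : ℝ)..1,
        (((p u).trace - (p (u - 1 / K)).trace) + 2 * c * ‖(1 : Mat D)‖) :=
        intervalIntegral.integral_mono_on_of_le_Ioo zero_le_one
          (intervalIntegrable_norm_sub_linearAddStepPath_tiltedSample hp hc)
          (hdiff.add intervalIntegrable_const)
          fun u hu => norm_sub_linearAddStepPath_tiltedSample_le hp hc (Ioo_subset_Ico_self hu)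
    _ = (∫ u in (0 : ℝ)..1, ((p u).trace - (p (u - 1 / K)).trace)) + 2 * c * ‖(1 : Mat D)‖ := by
        rw [intervalIntegral.integral_add hdiff intervalIntegrable_const,
          intervalIntegral.integral_const, sub_zero, one_smul]
    _ ≤ _ := by
        gcongr
        exact integral_sub_comp_sub_le (monotone_trace hp) zero_le_one hK

theorem exists_integral_norm_sub_linearAddStepPath_tiltedSample_lt (hp : Monotone p)
    (hp0 : ∀ u ≤ 0, p u = 0) {ε : ℝ} (hε : 0 < ε) : ∃ K ≠ 0, ∃ c > 0,
      ∫ u in (0 : ℝ)..1, ‖p u - linearAddStepPath c (tiltedSample K c p) u‖ < ε := by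
  set d := ‖(1 : Mat D)‖ + 1
  have hd : 0 < d := by positivity
  obtain ⟨n, hn⟩ := exists_nat_gt ((p 1).trace / (ε / 2))
  refine ⟨n + 1, n.succ_ne_zero, ε / (4 * d), by positivity, ?_⟩
  have hsample : 1 / ((n + 1 : ℕ) : ℝ) * (p 1).trace < ε / 2 := by
    rw [div_lt_iff₀ (by positivity)] at hn
    rw [one_div, inv_mul_lt_iff₀ (by positivity)]
    push_cast
    linarith
  have htilt : 2 * (ε / (4 * d)) * ‖(1 : Mat D)‖ ≤ ε / 2 :=
    calc 2 * (ε / (4 * d)) * ‖(1 : Mat D)‖ ≤ 2 * (ε / (4 * d)) * d :=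
          mul_le_mul_of_nonneg_left (le_add_of_nonneg_right zero_le_one) (by positivity)
      _ = ε / 2 := by field_simp; norm_num
  have hprev : p (0 - 1 / ((n + 1 : ℕ) : ℝ)) = 0 := hp0 _ (by rw [zero_sub, neg_nonpos]; positivity)
  have herr := integral_norm_sub_linearAddStepPath_tiltedSample_le (K := n + 1) hp
    (show 0 ≤ ε / (4 * d) by positivity)
  rw [hprev, Matrix.trace_zero, sub_zero] at herr
  linarith

end Approximation

theorem QInftyUp_dense_L1_general
    (D : ℕ) (q : ℝ → Mat D)
    (hqpsd : ∀ u ∈ Set.Ico (0 : ℝ) 1, (q u).PosSemidef)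
    (hqbdd : ∃ C : ℝ, ∀ u ∈ Set.Ico (0 : ℝ) 1, fnorm (q u) ≤ C)
    (hqmono : ∀ u v : ℝ, 0 ≤ u → u ≤ v → v < 1 → (q v - q u).PosSemidef)
    (ε : ℝ) (hε : 0 < ε) :
    ∃ (K : ℕ), 1 ≤ K ∧ ∃ (c : ℝ), 0 < c ∧ ∃ (Q : Fin K → Mat D),
      (∀ k : Fin K, (k : ℕ) = 0 → Q k = 0) ∧
      (∀ k l : Fin K, k ≤ l → (Q l - Q k).PosSemidef) ∧
      (∀ k : Fin K, (k : ℕ) ≠ 0 → (Q k).PosDef) ∧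
      IsQInftyUp (linearAddStepPath c Q) ∧
      IntervalIntegrable (fun u => fnorm (q u - linearAddStepPath c Q u))
        MeasureTheory.volume 0 1 ∧
      ∫ u in (0 : ℝ)..1, fnorm (q u - linearAddStepPath c Q u) < ε := by
  obtain ⟨C, hC⟩ := hqbdd
  simp only [fnorm_eq_frobenius_norm] at hC
  obtain ⟨p, hp, hp0, hpq⟩ := exists_monotone_eqOn_Ioo_of_norm_le
    (fun u hu v hv huv => Matrix.le_iff.mpr (hqmono u v hu.1.le huv hv.2))
    (fun u hu => Matrix.nonneg_iff_posSemidef.mpr (hqpsd u (Set.Ioo_subset_Ico_self hu)))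
    (fun u hu => hC u (Set.Ioo_subset_Ico_self hu))
  obtain ⟨K, hK, c, hc, herr⟩ :=
    exists_integral_norm_sub_linearAddStepPath_tiltedSample_lt hp hp0 hε
  have : NeZero K := ⟨hK⟩
  have hint := intervalIntegrable_norm_sub_linearAddStepPath_tiltedSample (K := K) hp hc.le
  simp only [← fnorm_eq_frobenius_norm] at herr hint
  have hcongr : Set.EqOn (fun u => fnorm (p u - linearAddStepPath c (tiltedSample K c p) u))
      (fun u => fnorm (q u - linearAddStepPath c (tiltedSample K c p) u)) (Set.uIoo 0 1) :=
    fun u hu => by simp only [hpq (Set.uIoo_of_le (zero_le_one' ℝ) ▸ hu)]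
  exact ⟨K, NeZero.one_le, c, hc, tiltedSample K c p, fun k hk => by simp [tiltedSample, hk, hp0],
    fun k l hkl => monotone_tiltedSample hp hc.le hkl,
    fun k hk => posDef_tiltedSample hp (hp0 0 le_rfl) hc hk,
    isQInftyUp_linearAddStepPath_tiltedSample hp (hp0 0 le_rfl) hc,
    hint.congr_uIoo hcongr, (intervalIntegral.integral_congr_uIoo hcongr).symm.trans_lt herr⟩

theorem QInftyUp_dense_L1
    (D : ℕ) (hD : 1 ≤ D) (q : ℝ → Mat D)
    (hqpsd : ∀ u ∈ Set.Ico (0:ℝ) 1, (q u).PosSemidef)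
    (hqbdd : ∃ C : ℝ, ∀ u ∈ Set.Ico (0:ℝ) 1, fnorm (q u) ≤ C)
    (hqmono : ∀ u v : ℝ, 0 ≤ u → u ≤ v → v < 1 → (q v - q u).PosSemidef)
    (hqcadlag : Cadlag q)
    (ε : ℝ) (hε : 0 < ε) :
    ∃ (K : ℕ), 1 ≤ K ∧ ∃ (c : ℝ), 0 < c ∧ ∃ (Q : Fin K → Mat D),
      (∀ k : Fin K, (k : ℕ) = 0 → Q k = 0) ∧
      (∀ k l : Fin K, k ≤ l → (Q l - Q k).PosSemidef) ∧
      (∀ k : Fin K, (k : ℕ) ≠ 0 → (Q k).PosDef) ∧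
      IsQInftyUp (fun u : ℝ =>
        (c * u) • (1 : Mat D) +
          ∑ k : Fin K,
            Set.indicator (Set.Ico ((k : ℝ) / K) (((k : ℝ) + 1) / K)) (fun _ => Q k) u) ∧
      (∫ u in (0:ℝ)..1,
        fnorm (q u -
          ((c * u) • (1 : Mat D) +
            ∑ k : Fin K,
              Set.indicator (Set.Ico ((k : ℝ) / K) (((k : ℝ) + 1) / K)) (fun _ => Q k) u)))
        < ε := by
  obtain ⟨K, hK, c, hc, Q, hQ0, hQmono, hQpos, hmem, -, hdist⟩ :=
    QInftyUp_dense_L1_general D q hqpsd hqbdd hqmono ε hε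
  exact ⟨K, hK, c, hc, Q, hQ0, hQmono, hQpos, hmem, hdist⟩

end
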